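/- (Similarity of costs) Let G(x,u) = A x + B u + f(x,u) with ‖f(x,u)‖ ≤ β(‖x‖² + ‖u‖²) for ‖x‖ + ‖u‖ ≤ r_nl; let γ ∈ (0,1], Q ⪰ I, R ⪰ I, and K be such that √γ·(A+BK) is stable with Lyapunov solution P. Let x_{t+1} = √γ·G(x_t, K x_t) be the damped nonlinear trajectory from x₀ and J_nl(K | γ, x₀) := Σ_{t=0}^∞ x_tᵀ (Q + KᵀRK) x_t the nonlinear cost. If x₀ᵀ P x₀ ≤ r_nl²/(4β²‖P‖_op³), then | J_nl(K | γ, x₀) − x₀ᵀ P x₀ | ≤ 8 β ‖x₀‖³ ‖P‖_op⁴. -/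

import Mathlib

open Matrix

/-- A real square matrix is stable if every complex eigenvalue has modulus `< 1`. -/
def IsStable {n : ℕ} (M : Matrix (Fin n) (Fin n) ℝ) : Prop :=
  ∀ μ ∈ spectrum ℂ (M.map Complex.ofReal), ‖μ‖ < 1

/-- Euclidean operator norm of a real matrix. -/
noncomputable def opNorm {p q : ℕ} (M : Matrix (Fin p) (Fin q) ℝ) : ℝ :=
  ‖LinearMap.toContinuousLinearMap (Matrix.toEuclideanLin M)‖

/-- Euclidean norm of a vector in `ℝ^n`. -/
noncomputable def evnorm {n : ℕ} (x : Fin n → ℝ) : ℝ :=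
  ‖(WithLp.equiv 2 (Fin n → ℝ)).symm x‖

/-- `P_{K,γ} = Σ_t γ^t ((A+BK)^t)ᵀ (Q + KᵀRK) (A+BK)^t`, the solution of the discounted
Lyapunov equation when `√γ (A+BK)` is stable. -/
noncomputable def lyapP {d m : ℕ} (A : Matrix (Fin d) (Fin d) ℝ) (B : Matrix (Fin d) (Fin m) ℝ)
    (Q : Matrix (Fin d) (Fin d) ℝ) (R : Matrix (Fin m) (Fin m) ℝ)
    (K : Matrix (Fin m) (Fin d) ℝ) (γ : ℝ) : Matrix (Fin d) (Fin d) ℝ :=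
  ∑' t : ℕ, γ ^ t • (((A + B * K) ^ t)ᵀ * (Q + Kᵀ * R * K) * (A + B * K) ^ t)

/-! The Lyapunov function `V x = xᵀPx` loses exactly the stage cost `c x = xᵀSx` per step of the
linear system `N = √γ(A + BK)`. In the seminorm `√V`, a perturbation of size `b c` moves the next
state by at most `s c`, where `s = b √‖P‖`, so one step of the perturbed system satisfies
`|V⁺ - (V - c)| ≤ s (√V + √(V - c)) c` as soon as `s √V ≤ 1/2`. On the given sublevel set,
`V ≤ ‖P‖ c` gives `s √V ≤ 1/2` and, by `‖P‖ - 1 ≤ ‖P‖²/4`, even `s √(V - c) ≤ 1/4`. Hence `V` still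
decreases by `c/4`, the sublevel set is invariant and `∑ c ≤ 4 V₀`; summing the one-step errors by
telescoping then bounds `|∑ c - V₀|` by `2 s √V₀ · 4 V₀`. -/

open Filter Topology
open scoped NNReal ENNReal

section GeometricDecay

theorem exists_eventually_norm_pow_le_of_spectralRadius_lt_one {𝒜 : Type*} [NormedRing 𝒜]
    [NormedAlgebra ℂ 𝒜] [CompleteSpace 𝒜] {a : 𝒜} (ha : spectralRadius ℂ a < 1) :
    ∃ r : ℝ≥0, r < 1 ∧ ∀ᶠ t : ℕ in atTop, ‖a ^ t‖ ≤ r ^ t := by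
  obtain ⟨r, har, hr⟩ := ENNReal.lt_iff_exists_nnreal_btwn.1 ha
  refine ⟨r, by exact_mod_cast hr, ?_⟩
  have gelfand := spectrum.pow_nnnorm_pow_one_div_tendsto_nhds_spectralRadius a
  filter_upwards [gelfand.eventually_le_const har, eventually_gt_atTop 0] with t hroot ht
  rw [one_div, ENNReal.rpow_inv_le_iff (Nat.cast_pos.2 ht), ENNReal.rpow_natCast] at hroot
  exact_mod_cast hroot

open scoped Matrix.Norms.Frobenius

theorem IsStable.spectralRadius_lt_one {n : ℕ} {M : Matrix (Fin n) (Fin n) ℝ} (hM : IsStable M) :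
    spectralRadius ℂ (M.map Complex.ofReal) < 1 := by
  have : CompleteSpace (Matrix (Fin n) (Fin n) ℂ) := FiniteDimensional.complete ℂ _
  cases subsingleton_or_nontrivial (Matrix (Fin n) (Fin n) ℂ)
  · simp only [spectrum.SpectralRadius.of_subsingleton, zero_lt_one]
  · exact_mod_cast spectrum.spectralRadius_lt_of_forall_lt (M.map Complex.ofReal) (r := 1) hM

theorem IsStable.exists_eventually_norm_pow_le {n : ℕ} {M : Matrix (Fin n) (Fin n) ℝ}
    (hM : IsStable M) : ∃ r : ℝ≥0, r < 1 ∧ ∀ᶠ t : ℕ in atTop, ‖M ^ t‖ ≤ r ^ t := by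
  have : CompleteSpace (Matrix (Fin n) (Fin n) ℂ) := FiniteDimensional.complete ℂ _
  have norm_pow_map (t : ℕ) : ‖M.map Complex.ofReal ^ t‖ = ‖M ^ t‖ := by
    rw [← Matrix.frobenius_norm_map_eq (M ^ t) Complex.ofReal Complex.norm_real]
    exact congrArg norm (map_pow Complex.ofRealHom.mapMatrix M t).symm
  simpa only [norm_pow_map] using
    exists_eventually_norm_pow_le_of_spectralRadius_lt_one hM.spectralRadius_lt_one

theorem IsStable.summable_transpose_pow_mul_mul_pow {n : ℕ} {M : Matrix (Fin n) (Fin n) ℝ}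
    (hM : IsStable M) (S : Matrix (Fin n) (Fin n) ℝ) :
    Summable fun t : ℕ => (M ^ t)ᵀ * S * M ^ t := by
  have : CompleteSpace (Matrix (Fin n) (Fin n) ℝ) := FiniteDimensional.complete ℝ _
  obtain ⟨r, hr, hpow⟩ := hM.exists_eventually_norm_pow_le
  have geometric : Summable fun t : ℕ => ‖S‖ * ((r : ℝ) ^ 2) ^ t :=
    (summable_geometric_of_lt_one (by positivity)
      (pow_lt_one₀ r.coe_nonneg (by exact_mod_cast hr) two_ne_zero)).mul_left _
  refine geometric.of_norm_bounded_eventually_nat ?_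
  filter_upwards [hpow] with t ht
  calc ‖(M ^ t)ᵀ * S * M ^ t‖ ≤ ‖(M ^ t)ᵀ‖ * ‖S‖ * ‖M ^ t‖ := norm_mul₃_le
    _ = ‖M ^ t‖ * ‖S‖ * ‖M ^ t‖ := by rw [Matrix.frobenius_norm_transpose]
    _ ≤ r ^ t * ‖S‖ * r ^ t := by gcongr
    _ = ‖S‖ * ((r : ℝ) ^ 2) ^ t := by ring

end GeometricDecay

section QuadraticForms

theorem posSemidef_of_sub_one {n : Type*} [DecidableEq n] {M : Matrix n n ℝ}
    (hM : (M - 1).PosSemidef) : M.PosSemidef :=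
  sub_add_cancel M 1 ▸ hM.add .one

variable {m n : Type*} [Fintype m] [Fintype n]

theorem dotProduct_transpose_mul_mul_mulVec {α : Type*} [CommSemiring α] (C : Matrix m n α)
    (M : Matrix m m α) (x : n → α) :
    x ⬝ᵥ (Cᵀ * M * C) *ᵥ x = (C *ᵥ x) ⬝ᵥ M *ᵥ (C *ᵥ x) := by
  rw [← mulVec_mulVec, ← mulVec_mulVec, dotProduct_mulVec x Cᵀ, vecMul_transpose]

theorem hasSum_dotProduct_mulVec {R ι : Type*} [Ring R] [TopologicalSpace R]
    [IsTopologicalRing R] {f : ι → Matrix m n R} {M : Matrix m n R} (hf : HasSum f M)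
    (x : m → R) (y : n → R) : HasSum (fun i => x ⬝ᵥ f i *ᵥ y) (x ⬝ᵥ M *ᵥ y) := by
  have additive (A B : Matrix m n R) : x ⬝ᵥ (A + B) *ᵥ y = x ⬝ᵥ A *ᵥ y + x ⬝ᵥ B *ᵥ y := by
    rw [add_mulVec, dotProduct_add]
  have continuous : Continuous fun A : Matrix m n R => x ⬝ᵥ A *ᵥ y := by fun_prop
  exact hf.map (AddMonoidHom.mk' _ additive) continuous

theorem posSemidef_of_hasSum {n ι : Type*} [Finite n] {f : ι → Matrix n n ℝ}
    {M : Matrix n n ℝ} (hf : ∀ i, (f i).PosSemidef) (hsum : HasSum f M) : M.PosSemidef := by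
  cases nonempty_fintype n
  refine .of_dotProduct_mulVec_nonneg ?_ fun x =>
    (hasSum_dotProduct_mulVec hsum _ x).nonneg fun i => (hf i).dotProduct_mulVec_nonneg x
  have hsum_star := hsum.matrix_conjTranspose
  simp only [(hf _).isHermitian.eq] at hsum_star
  exact hsum_star.unique hsum

theorem posSemidef_add_transpose_mul_mul_sub_one {n : Type*} [Finite n] [DecidableEq m]
    [DecidableEq n] {Q : Matrix n n ℝ} {R : Matrix m m ℝ} (hQ : (Q - 1).PosSemidef)
    (hR : (R - 1).PosSemidef) (K : Matrix m n ℝ) : (Q + Kᵀ * R * K - 1).PosSemidef := by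
  cases nonempty_fintype n
  rw [add_sub_right_comm]
  exact hQ.add ((posSemidef_of_sub_one hR).conjTranspose_mul_mul_same K)

theorem dotProduct_mulVec_self_nonneg {M : Matrix n n ℝ} (hM : M.PosSemidef) (x : n → ℝ) :
    0 ≤ x ⬝ᵥ M *ᵥ x := by
  simpa only [star_trivial] using hM.dotProduct_mulVec_nonneg x

theorem dotProduct_mulVec_comm_of_posSemidef {M : Matrix n n ℝ} (hM : M.PosSemidef)
    (x y : n → ℝ) : x ⬝ᵥ M *ᵥ y = y ⬝ᵥ M *ᵥ x := by
  rw [← dotProduct_transpose_mulVec, ← conjTranspose_eq_transpose_of_trivial, hM.isHermitian.eq]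

theorem abs_dotProduct_mulVec_le_sqrt_mul_sqrt {M : Matrix n n ℝ} (hM : M.PosSemidef)
    (x y : n → ℝ) : |x ⬝ᵥ M *ᵥ y| ≤ √(x ⬝ᵥ M *ᵥ x) * √(y ⬝ᵥ M *ᵥ y) := by
  classical
  have cauchy_schwarz := LinearMap.BilinForm.apply_mul_apply_le_of_forall_zero_le (toBilin' M)
    (fun z => by rw [toBilin'_apply']; exact dotProduct_mulVec_self_nonneg hM z) x y
  simp only [toBilin'_apply', dotProduct_mulVec_comm_of_posSemidef hM y x, ← sq] at cauchy_schwarz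
  rw [← Real.sqrt_mul (dotProduct_mulVec_self_nonneg hM x)]
  exact Real.abs_le_sqrt cauchy_schwarz

theorem abs_dotProduct_mulVec_add_sub_le {M : Matrix n n ℝ} (hM : M.PosSemidef) (x y : n → ℝ) :
    |(x + y) ⬝ᵥ M *ᵥ (x + y) - x ⬝ᵥ M *ᵥ x| ≤
      2 * √(x ⬝ᵥ M *ᵥ x) * √(y ⬝ᵥ M *ᵥ y) + y ⬝ᵥ M *ᵥ y := by
  have expand : (x + y) ⬝ᵥ M *ᵥ (x + y) - x ⬝ᵥ M *ᵥ x = 2 * (x ⬝ᵥ M *ᵥ y) + y ⬝ᵥ M *ᵥ y := by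
    rw [mulVec_add, add_dotProduct, dotProduct_add, dotProduct_add,
      dotProduct_mulVec_comm_of_posSemidef hM y x]
    ring
  calc |(x + y) ⬝ᵥ M *ᵥ (x + y) - x ⬝ᵥ M *ᵥ x|
      ≤ |2 * (x ⬝ᵥ M *ᵥ y)| + |y ⬝ᵥ M *ᵥ y| := expand ▸ abs_add_le _ _
    _ = 2 * |x ⬝ᵥ M *ᵥ y| + y ⬝ᵥ M *ᵥ y := by
        rw [abs_mul, abs_two, abs_of_nonneg (dotProduct_mulVec_self_nonneg hM y)]
    _ ≤ 2 * √(x ⬝ᵥ M *ᵥ x) * √(y ⬝ᵥ M *ᵥ y) + y ⬝ᵥ M *ᵥ y := by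
        rw [mul_assoc]
        gcongr
        exact abs_dotProduct_mulVec_le_sqrt_mul_sqrt hM x y

end QuadraticForms

section LyapunovEquation

/-- `P` is a positive semidefinite solution of the discrete Lyapunov equation of the linear system
`x ↦ N x` with stage cost `xᵀSx`. -/
structure IsLyapunovSolution {n : Type*} [Fintype n] (N S P : Matrix n n ℝ) : Prop where
  posSemidef : P.PosSemidef
  eq_add : P = S + Nᵀ * P * N

theorem isLyapunovSolution_tsum {n : Type*} [Fintype n] [DecidableEq n] {N S : Matrix n n ℝ}
    (hS : S.PosSemidef) (hsum : Summable fun t : ℕ => (N ^ t)ᵀ * S * N ^ t) :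
    IsLyapunovSolution N S (∑' t : ℕ, (N ^ t)ᵀ * S * N ^ t) where
  posSemidef := posSemidef_of_hasSum (fun t => hS.conjTranspose_mul_mul_same (N ^ t)) hsum.hasSum
  eq_add := by
    have shift (t : ℕ) : (N ^ (t + 1))ᵀ * S * N ^ (t + 1) = Nᵀ * ((N ^ t)ᵀ * S * N ^ t) * N := by
      simp only [pow_succ, transpose_mul, Matrix.mul_assoc]
    have conj_tsum : Nᵀ * (∑' t : ℕ, (N ^ t)ᵀ * S * N ^ t) * N =
        ∑' t : ℕ, Nᵀ * ((N ^ t)ᵀ * S * N ^ t) * N := by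
      rw [← hsum.tsum_mul_left, (hsum.mul_left Nᵀ).tsum_mul_right]
    rw [conj_tsum, hsum.tsum_eq_zero_add]
    simp only [shift, pow_zero, transpose_one, Matrix.one_mul, Matrix.mul_one]

namespace IsLyapunovSolution

variable {n : Type*} [Fintype n] {N S P : Matrix n n ℝ}

theorem dotProduct_mulVec_step (h : IsLyapunovSolution N S P) (x : n → ℝ) :
    (N *ᵥ x) ⬝ᵥ P *ᵥ (N *ᵥ x) = x ⬝ᵥ P *ᵥ x - x ⬝ᵥ S *ᵥ x := by
  conv_rhs => rw [h.eq_add, add_mulVec, dotProduct_add, dotProduct_transpose_mul_mul_mulVec]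
  ring

theorem cost_le (h : IsLyapunovSolution N S P) (x : n → ℝ) : x ⬝ᵥ S *ᵥ x ≤ x ⬝ᵥ P *ᵥ x :=
  sub_nonneg.1 <| h.dotProduct_mulVec_step x ▸ dotProduct_mulVec_self_nonneg h.posSemidef _

end IsLyapunovSolution

end LyapunovEquation

section EuclideanNorm

theorem evnorm_nonneg {n : ℕ} (x : Fin n → ℝ) : 0 ≤ evnorm x := norm_nonneg _

theorem evnorm_eq_zero {n : ℕ} {x : Fin n → ℝ} : evnorm x = 0 ↔ x = 0 :=
  norm_eq_zero.trans <| (WithLp.toLp_injective 2).eq_iff' rfl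

theorem evnorm_smul {n : ℕ} (a : ℝ) (x : Fin n → ℝ) : evnorm (a • x) = |a| * evnorm x :=
  norm_smul a (WithLp.toLp 2 x)

theorem opNorm_nonneg {p q : ℕ} (M : Matrix (Fin p) (Fin q) ℝ) : 0 ≤ opNorm M := norm_nonneg _

theorem dotProduct_self_eq_evnorm_sq {n : ℕ} (x : Fin n → ℝ) : x ⬝ᵥ x = evnorm x ^ 2 :=
  real_inner_self_eq_norm_sq (WithLp.toLp 2 x)

theorem dotProduct_mulVec_le_opNorm {p q : ℕ} (M : Matrix (Fin p) (Fin q) ℝ) (x : Fin p → ℝ)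
    (y : Fin q → ℝ) : x ⬝ᵥ M *ᵥ y ≤ opNorm M * evnorm x * evnorm y := by
  let T := LinearMap.toContinuousLinearMap (toEuclideanLin M)
  calc x ⬝ᵥ M *ᵥ y = inner ℝ (T (WithLp.toLp 2 y)) (WithLp.toLp 2 x) := rfl
    _ ≤ ‖T (WithLp.toLp 2 y)‖ * evnorm x := real_inner_le_norm _ _
    _ ≤ opNorm M * evnorm y * evnorm x := by gcongr; exacts [evnorm_nonneg x, T.le_opNorm _]
    _ = opNorm M * evnorm x * evnorm y := by ring

theorem dotProduct_mulVec_self_le_opNorm {n : ℕ} (M : Matrix (Fin n) (Fin n) ℝ) (x : Fin n → ℝ) :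
    x ⬝ᵥ M *ᵥ x ≤ opNorm M * evnorm x ^ 2 :=
  (dotProduct_mulVec_le_opNorm M x x).trans_eq (by ring)

theorem evnorm_sq_le_dotProduct_mulVec {n : ℕ} {M : Matrix (Fin n) (Fin n) ℝ}
    (hM : (M - 1).PosSemidef) (x : Fin n → ℝ) : evnorm x ^ 2 ≤ x ⬝ᵥ M *ᵥ x := by
  have h := dotProduct_mulVec_self_nonneg hM x
  rwa [sub_mulVec, one_mulVec, dotProduct_sub, dotProduct_self_eq_evnorm_sq, sub_nonneg] at h

theorem dotProduct_mulVec_self_le_opNorm_mul {n : ℕ} (P : Matrix (Fin n) (Fin n) ℝ)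
    {S : Matrix (Fin n) (Fin n) ℝ} (hS : (S - 1).PosSemidef) (x : Fin n → ℝ) :
    x ⬝ᵥ P *ᵥ x ≤ opNorm P * (x ⬝ᵥ S *ᵥ x) :=
  (dotProduct_mulVec_self_le_opNorm P x).trans <|
    mul_le_mul_of_nonneg_left (evnorm_sq_le_dotProduct_mulVec hS x) (opNorm_nonneg P)

end EuclideanNorm

section SequenceDecay

variable {V c : ℕ → ℝ}

theorem summable_and_tsum_le_of_le_mul_sub {C : ℝ} (hC : 0 ≤ C) (hV : ∀ t, 0 ≤ V t)
    (hc : ∀ t, 0 ≤ c t) (hdecay : ∀ t, c t ≤ C * (V t - V (t + 1))) :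
    Summable c ∧ ∑' t, c t ≤ C * V 0 := by
  have sum_le (T : ℕ) : ∑ t ∈ Finset.range T, c t ≤ C * V 0 :=
    calc ∑ t ∈ Finset.range T, c t ≤ ∑ t ∈ Finset.range T, C * (V t - V (t + 1)) :=
          Finset.sum_le_sum fun t _ => hdecay t
      _ = C * (V 0 - V T) := by rw [← Finset.mul_sum, Finset.sum_range_sub']
      _ ≤ C * V 0 := by gcongr; exact sub_le_self _ (hV T)
  exact ⟨summable_of_sum_range_le hc sum_le, Real.tsum_le_of_sum_range_le hc sum_le⟩

theorem abs_tsum_sub_le_of_abs_sub_le {κ : ℝ} (hV : Tendsto V atTop (𝓝 0)) (hc : Summable c)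
    (herr : ∀ t, |V (t + 1) - (V t - c t)| ≤ κ * c t) :
    |∑' t, c t - V 0| ≤ κ * ∑' t, c t := by
  have err_summable : Summable fun t => V (t + 1) - (V t - c t) :=
    .of_norm_bounded (hc.mul_left κ) herr
  have telescope : HasSum (fun t => V t - V (t + 1)) (V 0) := by
    have summable : Summable fun t => V t - V (t + 1) :=
      (hc.sub err_summable).congr fun t => by ring
    rw [summable.hasSum_iff_tendsto_nat]
    simpa only [Finset.sum_range_sub', sub_zero] using hV.const_sub (V 0)
  refine (hc.hasSum.sub telescope).norm_le_of_bounded (hc.hasSum.mul_left κ) fun t => ?_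
  rw [show c t - (V t - V (t + 1)) = V (t + 1) - (V t - c t) by ring]
  exact herr t

theorem summable_and_abs_tsum_sub_le_of_sublevel_decay {κ p : ℝ} (hκ : 0 ≤ κ) (hV : ∀ t, 0 ≤ V t)
    (hc : ∀ t, 0 ≤ c t) (hVc : ∀ t, V t ≤ p * c t)
    (hdecay : ∀ t, V t ≤ V 0 → V (t + 1) ≤ V t - c t / 4)
    (herr : ∀ t, V t ≤ V 0 → |V (t + 1) - (V t - c t)| ≤ κ * c t) :
    Summable c ∧ |∑' t, c t - V 0| ≤ 4 * κ * V 0 := by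
  have sublevel (t : ℕ) : V t ≤ V 0 := by
    induction t with
    | zero => exact le_rfl
    | succ t ih => linarith [hdecay t ih, hc t]
  obtain ⟨c_summable, tsum_le⟩ := summable_and_tsum_le_of_le_mul_sub (C := 4) (by norm_num) hV hc
    fun t => by linarith [hdecay t (sublevel t)]
  have V_tendsto : Tendsto V atTop (𝓝 0) :=
    squeeze_zero hV hVc (by simpa only [mul_zero] using c_summable.tendsto_atTop_zero.const_mul p)
  refine ⟨c_summable, ?_⟩
  calc |∑' t, c t - V 0| ≤ κ * ∑' t, c t :=
        abs_tsum_sub_le_of_abs_sub_le V_tendsto c_summable fun t => herr t (sublevel t)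
    _ ≤ κ * (4 * V 0) := by gcongr
    _ = 4 * κ * V 0 := by ring

end SequenceDecay

section OneStepEstimates

theorem two_mul_add_sq_le_of_mul_le_half {u v s : ℝ} (hu : 0 ≤ u) (huv : u ≤ v) (hs : 0 ≤ s)
    (hsv : s * v ≤ 1 / 2) :
    2 * u * (s * (v ^ 2 - u ^ 2)) + (s * (v ^ 2 - u ^ 2)) ^ 2 ≤
      s * (u + v) * (v ^ 2 - u ^ 2) := by
  set δ := s * (v ^ 2 - u ^ 2) with hδ
  have δ_nonneg : 0 ≤ δ := mul_nonneg hs (by nlinarith)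
  have δ_le : δ ≤ v - u :=
    calc δ = s * (u + v) * (v - u) := by ring
      _ ≤ 1 * (v - u) := by gcongr; nlinarith
      _ = v - u := one_mul _
  calc 2 * u * δ + δ ^ 2 = δ * (2 * u + δ) := by ring
    _ ≤ δ * (2 * u + (v - u)) := by gcongr
    _ = s * (u + v) * (v ^ 2 - u ^ 2) := by rw [hδ]; ring

theorem mul_sqrt_mul_sqrt_le {b p V a : ℝ} (hb : 0 ≤ b) (hp : 0 ≤ p) (ha : 0 ≤ a)
    (h : b ^ 2 * (p * V) ≤ a ^ 2) : b * √p * √V ≤ a :=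
  calc b * √p * √V = √(b ^ 2 * (p * V)) := by
        rw [Real.sqrt_mul (sq_nonneg b), Real.sqrt_sq hb, Real.sqrt_mul hp, mul_assoc]
    _ ≤ a := (Real.sqrt_le_left ha).2 h

theorem mul_sqrt_mul_sqrt_le_half {b p V c : ℝ} (hb : 0 ≤ b) (hp : 0 ≤ p) (hcV : c ≤ V)
    (hVc : V ≤ p * c) (hsmall : 4 * b ^ 2 * p ^ 2 * V ≤ 1) : b * √p * √V ≤ 1 / 2 := by
  refine mul_sqrt_mul_sqrt_le hb hp (by norm_num) ?_
  calc b ^ 2 * (p * V) ≤ b ^ 2 * (p * (p * V)) := by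
        gcongr
        exact hVc.trans (by gcongr)
    _ ≤ (1 / 2) ^ 2 := by linarith

theorem mul_sqrt_mul_sqrt_sub_le_quarter {b p V c : ℝ} (hb : 0 ≤ b) (hp : 0 ≤ p) (hV : 0 ≤ V)
    (hVc : V ≤ p * c) (hsmall : 4 * b ^ 2 * p ^ 2 * V ≤ 1) : b * √p * √(V - c) ≤ 1 / 4 := by
  refine mul_sqrt_mul_sqrt_le hb hp (by norm_num) ?_
  have p_sub_one_le : p - 1 ≤ p ^ 2 / 4 := by linarith [sq_nonneg (p - 2)]
  calc b ^ 2 * (p * (V - c)) ≤ b ^ 2 * ((p - 1) * V) :=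
        mul_le_mul_of_nonneg_left (by linarith) (sq_nonneg b)
    _ ≤ b ^ 2 * (p ^ 2 / 4 * V) := by gcongr
    _ ≤ (1 / 4) ^ 2 := by linarith

theorem add_le_of_two_mul_sq_add_sq_le {a b r : ℝ} (hr : 0 ≤ r)
    (h : 2 * (a ^ 2 + b ^ 2) ≤ r ^ 2) : a + b ≤ r :=
  le_of_abs_le <| abs_le_of_sq_le_sq (add_sq_le.trans h) hr

theorem two_mul_le_and_mul_le_one_of_le_div {β p r V : ℝ} (hβ : 1 ≤ β) (hp : 1 ≤ p) (hr0 : 0 ≤ r)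
    (hr1 : r ≤ 1) (hV0 : 0 ≤ V) (hV : V ≤ r ^ 2 / (4 * β ^ 2 * p ^ 3)) :
    2 * V ≤ r ^ 2 ∧ 4 * β ^ 2 * p ^ 2 * V ≤ 1 := by
  have sublevel : 4 * β ^ 2 * p ^ 3 * V ≤ r ^ 2 := (le_div_iff₀' (by positivity)).1 hV
  constructor
  · calc 2 * V ≤ 4 * 1 ^ 2 * 1 ^ 3 * V := by linarith
      _ ≤ 4 * β ^ 2 * p ^ 3 * V := by gcongr
      _ ≤ r ^ 2 := sublevel
  · calc 4 * β ^ 2 * p ^ 2 * V ≤ 4 * β ^ 2 * p ^ 3 * V := by gcongr; norm_num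
      _ ≤ r ^ 2 := sublevel
      _ ≤ 1 := pow_le_one₀ hr0 hr1

end OneStepEstimates

namespace IsLyapunovSolution

variable {d : ℕ} {N S P : Matrix (Fin d) (Fin d) ℝ}

theorem one_le_opNorm (h : IsLyapunovSolution N S P) (hS : (S - 1).PosSemidef) {x : Fin d → ℝ}
    (hx : x ≠ 0) : 1 ≤ opNorm P := by
  have evnorm_sq_pos : 0 < evnorm x ^ 2 := sq_pos_of_ne_zero (evnorm_eq_zero.not.2 hx)
  refine le_of_mul_le_mul_right ?_ evnorm_sq_pos
  calc 1 * evnorm x ^ 2 = evnorm x ^ 2 := one_mul _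
    _ ≤ x ⬝ᵥ S *ᵥ x := evnorm_sq_le_dotProduct_mulVec hS x
    _ ≤ x ⬝ᵥ P *ᵥ x := h.cost_le x
    _ ≤ opNorm P * evnorm x ^ 2 := dotProduct_mulVec_self_le_opNorm P x

theorem abs_perturbed_step_sub_le (h : IsLyapunovSolution N S P) {b : ℝ} (hb : 0 ≤ b)
    {x e : Fin d → ℝ} (hc : 0 ≤ x ⬝ᵥ S *ᵥ x) (he : evnorm e ≤ b * (x ⬝ᵥ S *ᵥ x))
    (hsV : b * √(opNorm P) * √(x ⬝ᵥ P *ᵥ x) ≤ 1 / 2) :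
    |(N *ᵥ x + e) ⬝ᵥ P *ᵥ (N *ᵥ x + e) - (x ⬝ᵥ P *ᵥ x - x ⬝ᵥ S *ᵥ x)| ≤
      b * √(opNorm P) * (√(x ⬝ᵥ P *ᵥ x - x ⬝ᵥ S *ᵥ x) + √(x ⬝ᵥ P *ᵥ x)) * (x ⬝ᵥ S *ᵥ x) := by
  set V := x ⬝ᵥ P *ᵥ x
  set c := x ⬝ᵥ S *ᵥ x
  set s := b * √(opNorm P) with hs
  have s_nonneg : 0 ≤ s := by positivity
  have c_le : c ≤ V := h.cost_le x
  have e_le : e ⬝ᵥ P *ᵥ e ≤ (s * c) ^ 2 :=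
    calc e ⬝ᵥ P *ᵥ e ≤ opNorm P * evnorm e ^ 2 := dotProduct_mulVec_self_le_opNorm P e
      _ ≤ opNorm P * (b * c) ^ 2 := by
          gcongr
          exacts [opNorm_nonneg P, evnorm_nonneg e]
      _ = (s * c) ^ 2 := by rw [hs, mul_pow, mul_pow, mul_pow, Real.sq_sqrt (opNorm_nonneg P)]; ring
  have c_eq : c = √V ^ 2 - √(V - c) ^ 2 := by
    rw [Real.sq_sqrt (hc.trans c_le), Real.sq_sqrt (sub_nonneg.2 c_le), sub_sub_cancel]
  calc |(N *ᵥ x + e) ⬝ᵥ P *ᵥ (N *ᵥ x + e) - (V - c)|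
      ≤ 2 * √(V - c) * √(e ⬝ᵥ P *ᵥ e) + e ⬝ᵥ P *ᵥ e := by
        rw [← h.dotProduct_mulVec_step x]
        exact abs_dotProduct_mulVec_add_sub_le h.posSemidef _ _
    _ ≤ 2 * √(V - c) * (s * c) + (s * c) ^ 2 := by
        gcongr
        exact (Real.sqrt_le_left (by positivity)).2 e_le
    _ ≤ s * (√(V - c) + √V) * c := by
        have := two_mul_add_sq_le_of_mul_le_half (Real.sqrt_nonneg (V - c))
          (Real.sqrt_le_sqrt (sub_le_self V hc)) s_nonneg hsV
        rwa [← c_eq] at this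

theorem perturbed_step_estimates (h : IsLyapunovSolution N S P) (hS : (S - 1).PosSemidef) {b : ℝ}
    (hb : 0 ≤ b) {x e : Fin d → ℝ} (he : evnorm e ≤ b * (x ⬝ᵥ S *ᵥ x))
    (hsmall : 4 * b ^ 2 * opNorm P ^ 2 * (x ⬝ᵥ P *ᵥ x) ≤ 1) :
    (N *ᵥ x + e) ⬝ᵥ P *ᵥ (N *ᵥ x + e) ≤ x ⬝ᵥ P *ᵥ x - x ⬝ᵥ S *ᵥ x / 4 ∧
    |(N *ᵥ x + e) ⬝ᵥ P *ᵥ (N *ᵥ x + e) - (x ⬝ᵥ P *ᵥ x - x ⬝ᵥ S *ᵥ x)| ≤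
      2 * (b * √(opNorm P) * √(x ⬝ᵥ P *ᵥ x)) * (x ⬝ᵥ S *ᵥ x) := by
  have c_nonneg := (sq_nonneg (evnorm x)).trans (evnorm_sq_le_dotProduct_mulVec hS x)
  have V_nonneg := dotProduct_mulVec_self_nonneg h.posSemidef x
  have V_le := dotProduct_mulVec_self_le_opNorm_mul P hS x
  have sV_le := mul_sqrt_mul_sqrt_le_half hb (opNorm_nonneg P) (h.cost_le x) V_le hsmall
  have su_le := mul_sqrt_mul_sqrt_sub_le_quarter hb (opNorm_nonneg P) V_nonneg V_le hsmall
  have err_le := h.abs_perturbed_step_sub_le hb c_nonneg he sV_le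
  constructor
  · have factor_le : b * √(opNorm P) * (√(x ⬝ᵥ P *ᵥ x - x ⬝ᵥ S *ᵥ x) + √(x ⬝ᵥ P *ᵥ x)) ≤ 3 / 4 := by
      linarith
    linarith [le_of_abs_le err_le, mul_le_mul_of_nonneg_right factor_le c_nonneg]
  · refine err_le.trans (mul_le_mul_of_nonneg_right ?_ c_nonneg)
    rw [mul_left_comm, two_mul]
    gcongr
    exact sub_le_self _ c_nonneg

theorem summable_and_abs_tsum_cost_sub_le (h : IsLyapunovSolution N S P)
    (hS : (S - 1).PosSemidef) {b : ℝ} (hb : 0 ≤ b) {x e : ℕ → Fin d → ℝ}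
    (hstep : ∀ t, x (t + 1) = N *ᵥ x t + e t)
    (he : ∀ t, x t ⬝ᵥ P *ᵥ x t ≤ x 0 ⬝ᵥ P *ᵥ x 0 → evnorm (e t) ≤ b * (x t ⬝ᵥ S *ᵥ x t))
    (hsmall : 4 * b ^ 2 * opNorm P ^ 2 * (x 0 ⬝ᵥ P *ᵥ x 0) ≤ 1) :
    Summable (fun t => x t ⬝ᵥ S *ᵥ x t) ∧
    |∑' t, x t ⬝ᵥ S *ᵥ x t - x 0 ⬝ᵥ P *ᵥ x 0| ≤ 8 * b * evnorm (x 0) ^ 3 * opNorm P ^ 2 := by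
  have p_nonneg := opNorm_nonneg P
  have r_nonneg := evnorm_nonneg (x 0)
  have V_nonneg (t : ℕ) := dotProduct_mulVec_self_nonneg h.posSemidef (x t)
  have c_nonneg (t : ℕ) := (sq_nonneg _).trans (evnorm_sq_le_dotProduct_mulVec hS (x t))
  have V_zero_le := dotProduct_mulVec_self_le_opNorm P (x 0)
  have step (t : ℕ) (ht : x t ⬝ᵥ P *ᵥ x t ≤ x 0 ⬝ᵥ P *ᵥ x 0) :=
    hstep t ▸ h.perturbed_step_estimates hS hb (he t ht) (hsmall.trans' (by gcongr))
  have err_le (t : ℕ) (ht : x t ⬝ᵥ P *ᵥ x t ≤ x 0 ⬝ᵥ P *ᵥ x 0) :=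
    (step t ht).2.trans (mul_le_mul_of_nonneg_right (by gcongr) (c_nonneg t) :
      _ ≤ 2 * (b * √(opNorm P) * √(x 0 ⬝ᵥ P *ᵥ x 0)) * (x t ⬝ᵥ S *ᵥ x t))
  have sV_le : b * √(opNorm P) * √(x 0 ⬝ᵥ P *ᵥ x 0) ≤ b * opNorm P * evnorm (x 0) :=
    mul_sqrt_mul_sqrt_le hb p_nonneg (by positivity) <|
      calc b ^ 2 * (opNorm P * (x 0 ⬝ᵥ P *ᵥ x 0))
          ≤ b ^ 2 * (opNorm P * (opNorm P * evnorm (x 0) ^ 2)) := by gcongr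
        _ = (b * opNorm P * evnorm (x 0)) ^ 2 := by ring
  obtain ⟨c_summable, tsum_le⟩ := summable_and_abs_tsum_sub_le_of_sublevel_decay (by positivity)
    V_nonneg c_nonneg (fun t => dotProduct_mulVec_self_le_opNorm_mul P hS (x t))
    (fun t ht => (step t ht).1) err_le
  refine ⟨c_summable, tsum_le.trans ?_⟩
  calc 4 * (2 * (b * √(opNorm P) * √(x 0 ⬝ᵥ P *ᵥ x 0))) * (x 0 ⬝ᵥ P *ᵥ x 0)
      ≤ 4 * (2 * (b * opNorm P * evnorm (x 0))) * (opNorm P * evnorm (x 0) ^ 2) := by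
        gcongr
        exact V_nonneg 0
    _ = 8 * b * evnorm (x 0) ^ 3 * opNorm P ^ 2 := by ring

theorem sublevel_bounds_of_le_div (h : IsLyapunovSolution N S P) (hS : (S - 1).PosSemidef)
    {b β r : ℝ} (hb : 0 ≤ b) (hbβ : b ≤ β) (hβ : 1 ≤ β) (hr0 : 0 ≤ r) (hr1 : r ≤ 1)
    {x : Fin d → ℝ} (hV : x ⬝ᵥ P *ᵥ x ≤ r ^ 2 / (4 * β ^ 2 * opNorm P ^ 3)) :
    2 * (x ⬝ᵥ P *ᵥ x) ≤ r ^ 2 ∧ 4 * b ^ 2 * opNorm P ^ 2 * (x ⬝ᵥ P *ᵥ x) ≤ 1 ∧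
    8 * b * evnorm x ^ 3 * opNorm P ^ 2 ≤ 8 * β * evnorm x ^ 3 * opNorm P ^ 4 := by
  obtain rfl | hx := eq_or_ne x 0
  · simp [evnorm_eq_zero.2, sq_nonneg]
  have one_le_p := h.one_le_opNorm hS hx
  have evnorm_x_nonneg := evnorm_nonneg x
  obtain ⟨two_mul_le, mul_le_one⟩ := two_mul_le_and_mul_le_one_of_le_div hβ one_le_p hr0 hr1
    (dotProduct_mulVec_self_nonneg h.posSemidef x) hV
  refine ⟨two_mul_le, mul_le_one.trans' ?_, ?_⟩
  · gcongr
    exact dotProduct_mulVec_self_nonneg h.posSemidef x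
  · gcongr
    norm_num

end IsLyapunovSolution

section DampedClosedLoop

variable {d m : ℕ} {A Q : Matrix (Fin d) (Fin d) ℝ} {B : Matrix (Fin d) (Fin m) ℝ}
  {R : Matrix (Fin m) (Fin m) ℝ} {K : Matrix (Fin m) (Fin d) ℝ}

theorem evnorm_sq_add_evnorm_mulVec_sq_le (hQ : (Q - 1).PosSemidef) (hR : (R - 1).PosSemidef)
    (x : Fin d → ℝ) :
    evnorm x ^ 2 + evnorm (K *ᵥ x) ^ 2 ≤ x ⬝ᵥ (Q + Kᵀ * R * K) *ᵥ x := by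
  rw [add_mulVec, dotProduct_add, dotProduct_transpose_mul_mul_mulVec]
  exact add_le_add (evnorm_sq_le_dotProduct_mulVec hQ x) (evnorm_sq_le_dotProduct_mulVec hR _)

theorem lyapP_eq_tsum {γ : ℝ} (hγ : 0 ≤ γ) :
    lyapP A B Q R K γ =
      ∑' t : ℕ, ((√γ • (A + B * K)) ^ t)ᵀ * (Q + Kᵀ * R * K) * (√γ • (A + B * K)) ^ t := by
  refine tsum_congr fun t => ?_
  rw [smul_pow, transpose_smul, Matrix.smul_mul, Matrix.smul_mul, Matrix.mul_smul, smul_smul,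
    ← mul_pow, Real.mul_self_sqrt hγ]

theorem isLyapunovSolution_lyapP {γ : ℝ} (hγ : 0 ≤ γ) (hQ : Q.PosSemidef) (hR : R.PosSemidef)
    (hstab : IsStable (√γ • (A + B * K))) :
    IsLyapunovSolution (√γ • (A + B * K)) (Q + Kᵀ * R * K) (lyapP A B Q R K γ) :=
  lyapP_eq_tsum hγ ▸ isLyapunovSolution_tsum (hQ.add (hR.conjTranspose_mul_mul_same K))
    (hstab.summable_transpose_pow_mul_mul_pow _)

theorem smul_eq_mulVec_add_smul_remainder (a : ℝ) (x y : Fin d → ℝ) :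
    a • y = (a • (A + B * K)) *ᵥ x + a • (y - (A *ᵥ x + B *ᵥ (K *ᵥ x))) := by
  rw [smul_mulVec, add_mulVec, ← mulVec_mulVec, ← smul_add, add_sub_cancel]

end DampedClosedLoop

theorem similarity_of_costs_general {d m : ℕ}
    (G : (Fin d → ℝ) → (Fin m → ℝ) → (Fin d → ℝ))
    (A : Matrix (Fin d) (Fin d) ℝ) (B : Matrix (Fin d) (Fin m) ℝ)
    (Q : Matrix (Fin d) (Fin d) ℝ) (R : Matrix (Fin m) (Fin m) ℝ)
    (K : Matrix (Fin m) (Fin d) ℝ)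
    (β rnl : ℝ) (hβ : 0 ≤ β) (hrnl : 0 ≤ rnl)
    (hf : ∀ (x : Fin d → ℝ) (u : Fin m → ℝ), evnorm x + evnorm u ≤ rnl →
      evnorm (G x u - (A *ᵥ x + B *ᵥ u)) ≤ β * (evnorm x ^ 2 + evnorm u ^ 2))
    (γ : ℝ) (hγ : 0 ≤ γ) (hQ : (Q - 1).PosSemidef) (hR : (R - 1).PosSemidef)
    (hstab : IsStable (√γ • (A + B * K)))
    (x : ℕ → Fin d → ℝ) (hstep : ∀ t : ℕ, x (t + 1) = √γ • G (x t) (K *ᵥ x t))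
    (hregion : 2 * (x 0 ⬝ᵥ lyapP A B Q R K γ *ᵥ x 0) ≤ rnl ^ 2)
    (hsmall : 4 * (√γ * β) ^ 2 * opNorm (lyapP A B Q R K γ) ^ 2 *
      (x 0 ⬝ᵥ lyapP A B Q R K γ *ᵥ x 0) ≤ 1) :
    Summable (fun t : ℕ => x t ⬝ᵥ (Q + Kᵀ * R * K) *ᵥ x t)
    ∧ |(∑' t : ℕ, x t ⬝ᵥ (Q + Kᵀ * R * K) *ᵥ x t) - x 0 ⬝ᵥ lyapP A B Q R K γ *ᵥ x 0|
        ≤ 8 * (√γ * β) * evnorm (x 0) ^ 3 * opNorm (lyapP A B Q R K γ) ^ 2 := by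
  have cost_sub_one := posSemidef_add_transpose_mul_mul_sub_one hQ hR K
  have lyapunov := isLyapunovSolution_lyapP hγ (posSemidef_of_sub_one hQ)
    (posSemidef_of_sub_one hR) hstab
  refine lyapunov.summable_and_abs_tsum_cost_sub_le cost_sub_one (by positivity)
    (fun t => (hstep t).trans (smul_eq_mulVec_add_smul_remainder _ (x t) _)) (fun t ht => ?_) hsmall
  have norms_le_cost := evnorm_sq_add_evnorm_mulVec_sq_le (K := K) hQ hR (x t)
  have in_region : evnorm (x t) + evnorm (K *ᵥ x t) ≤ rnl :=
    add_le_of_two_mul_sq_add_sq_le hrnl (by linarith [lyapunov.cost_le (x t)])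
  calc evnorm (√γ • (G (x t) (K *ᵥ x t) - (A *ᵥ x t + B *ᵥ (K *ᵥ x t))))
      = √γ * evnorm (G (x t) (K *ᵥ x t) - (A *ᵥ x t + B *ᵥ (K *ᵥ x t))) := by
        rw [evnorm_smul, abs_of_nonneg (Real.sqrt_nonneg γ)]
    _ ≤ √γ * (β * (x t ⬝ᵥ (Q + Kᵀ * R * K) *ᵥ x t)) := by
        gcongr
        exact (hf _ _ in_region).trans (by gcongr)
    _ = √γ * β * (x t ⬝ᵥ (Q + Kᵀ * R * K) *ᵥ x t) := (mul_assoc _ _ _).symm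

/-- Similarity of costs: for initial states in the Lyapunov sublevel set, the nonlinear
cost converges and differs from the linearized cost `x₀ᵀPx₀` by at most `8β‖x₀‖³‖P‖⁴`. -/
theorem similarity_of_costs {d m : ℕ}
    (G : (Fin d → ℝ) → (Fin m → ℝ) → (Fin d → ℝ))
    (A : Matrix (Fin d) (Fin d) ℝ) (B : Matrix (Fin d) (Fin m) ℝ)
    (Q : Matrix (Fin d) (Fin d) ℝ) (R : Matrix (Fin m) (Fin m) ℝ)
    (K : Matrix (Fin m) (Fin d) ℝ)
    (β rnl : ℝ) (hβ : 1 ≤ β) (hrnl0 : 0 < rnl) (hrnl1 : rnl ≤ 1)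
    (hf : ∀ (x : Fin d → ℝ) (u : Fin m → ℝ), evnorm x + evnorm u ≤ rnl →
      evnorm (G x u - (A.mulVec x + B.mulVec u)) ≤ β * (evnorm x ^ 2 + evnorm u ^ 2))
    (γ : ℝ) (hγ : γ ∈ Set.Ioc (0 : ℝ) 1)
    (hQ : (Q - 1).PosSemidef) (hR : (R - 1).PosSemidef)
    (hstab : IsStable (Real.sqrt γ • (A + B * K)))
    (x : ℕ → Fin d → ℝ)
    (hstep : ∀ t : ℕ, x (t + 1) = Real.sqrt γ • G (x t) (K.mulVec (x t)))
    (hV0 : x 0 ⬝ᵥ (lyapP A B Q R K γ).mulVec (x 0)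
        ≤ rnl ^ 2 / (4 * β ^ 2 * opNorm (lyapP A B Q R K γ) ^ 3)) :
    Summable (fun t : ℕ => x t ⬝ᵥ (Q + Kᵀ * R * K).mulVec (x t))
    ∧ |(∑' t : ℕ, x t ⬝ᵥ (Q + Kᵀ * R * K).mulVec (x t))
          - x 0 ⬝ᵥ (lyapP A B Q R K γ).mulVec (x 0)|
        ≤ 8 * β * evnorm (x 0) ^ 3 * opNorm (lyapP A B Q R K γ) ^ 4 := by
  have lyapunov := isLyapunovSolution_lyapP hγ.1.le (posSemidef_of_sub_one hQ)
    (posSemidef_of_sub_one hR) hstab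
  obtain ⟨hregion, hsmall, hbound⟩ := lyapunov.sublevel_bounds_of_le_div
    (posSemidef_add_transpose_mul_mul_sub_one hQ hR K) (by positivity)
    (mul_le_of_le_one_left (by positivity) (Real.sqrt_le_one.2 hγ.2)) hβ hrnl0.le hrnl1 hV0
  exact (similarity_of_costs_general G A B Q R K β rnl (by positivity) hrnl0.le hf γ hγ.1.le hQ hR
    hstab x hstep hregion hsmall).imp_right (·.trans hbound)
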